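/- Let f : ℝ^{d×d} × ℝ → ℝ be C³ satisfying |f_F(z₁,z₂)| ≤ c(1 + |z₁|^{p-1} + |z₂|^{q(p-1)/p}) and |f_η(z₁,z₂)| ≤ c(1 + |z₁|^{p(q-1)/q} + |z₂|^{q-1}), with p, q ≥ 2. Then for every K > 0 and δ > 0 there exists R = R(δ,f,K) > 0 such that for all (λ₁,λ₂), (μ₁,μ₂) with |λ₁|+|λ₂| ≤ K, |μ₁|+|μ₂| ≤ K and |(λ₁,λ₂) − (μ₁,μ₂)| < R, and all (ξ₁,ξ₂): |f(λ₁+ξ₁, λ₂+ξ₂ | λ₁, λ₂) − f(μ₁+ξ₁, μ₂+ξ₂ | μ₁, μ₂)| ≤ δ (|V_p(ξ₁)|² + |V_q(ξ₂)|²). -/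

import Mathlib

/-- The space of `d×d` matrices, modelled as linear maps on `ℝ^d`. -/
abbrev MatSp (d : ℕ) := EuclideanSpace ℝ (Fin d) →L[ℝ] EuclideanSpace ℝ (Fin d)

/-!
The difference of the relative functions of `f` with base points `l` and `m` is the relative
function with base point `l` of the single function `x ↦ f x - f (x + (m - l))`. For `‖ξ‖ ≤ 1` the
second-order mean value inequality bounds it by the modulus of continuity of `D²f` times `‖ξ‖²`.
For `1 ≤ ‖ξ‖` no cancellation is needed: the growth of `Df` bounds `f (l + ξ) - f (m + ξ)` by
`‖l - m‖` times `1 + ‖ξ₁‖ ^ p + ‖ξ₂‖ ^ q`, and constants as well as multiples of `‖ξ‖` are absorbed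
by `‖ξ‖²`.
-/

open Metric

section Derivatives

variable {𝕜 E F G : Type*} [NontriviallyNormedField 𝕜] [NormedAddCommGroup E] [NormedSpace 𝕜 E]
  [NormedAddCommGroup F] [NormedSpace 𝕜 F] [NormedAddCommGroup G] [NormedSpace 𝕜 G]

lemma fderiv_sub_comp_add_right {f : E → G} (hf : Differentiable 𝕜 f) (h : E) :
    fderiv 𝕜 (fun x => f x - f (x + h)) = fun x => fderiv 𝕜 f x - fderiv 𝕜 f (x + h) := by
  ext1 x
  rw [fderiv_fun_sub (hf x) ((differentiableAt_comp_add_right h).2 (hf (x + h))),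
    fderiv_comp_add_right]

lemma fderiv_eq_coprod_of_hasFDerivAt_partial {f : E × F → G} {z : E × F} {L : E →L[𝕜] G}
    {M : F →L[𝕜] G} (hf : DifferentiableAt 𝕜 f z) (hL : HasFDerivAt (fun x => f (x, z.2)) L z.1)
    (hM : HasFDerivAt (fun y => f (z.1, y)) M z.2) : fderiv 𝕜 f z = L.coprod M := by
  have hinl : (fderiv 𝕜 f z).comp (.inl 𝕜 E F) = L :=
    (hf.hasFDerivAt.comp z.1 (hasFDerivAt_prodMk_left z.1 z.2)).unique hL
  have hinr : (fderiv 𝕜 f z).comp (.inr 𝕜 E F) = M :=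
    (hf.hasFDerivAt.comp z.2 (hasFDerivAt_prodMk_right z.1 z.2)).unique hM
  rw [← hinl, ← hinr, ContinuousLinearMap.coprod_comp_inl_inr]

lemma opNorm_coprod_le_add (L : E →L[𝕜] G) (M : F →L[𝕜] G) : ‖L.coprod M‖ ≤ ‖L‖ + ‖M‖ := by
  refine ContinuousLinearMap.opNorm_le_bound _ (by positivity) fun v => ?_
  calc ‖L v.1 + M v.2‖ ≤ ‖L‖ * ‖v.1‖ + ‖M‖ * ‖v.2‖ :=
        norm_add_le_of_le (L.le_opNorm _) (M.le_opNorm _)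
    _ ≤ ‖L‖ * ‖v‖ + ‖M‖ * ‖v‖ := by
        gcongr
        exacts [norm_fst_le v, norm_snd_le v]
    _ = (‖L‖ + ‖M‖) * ‖v‖ := by ring

end Derivatives

lemma exists_forall_norm_sub_lt_of_continuous {E G : Type*} [SeminormedAddCommGroup E]
    [ProperSpace E] [SeminormedAddCommGroup G] {g : E → G} (hg : Continuous g) (K : ℝ) {ε : ℝ}
    (hε : 0 < ε) :
    ∃ r > 0, ∀ x y : E, ‖x‖ ≤ K → ‖y‖ ≤ K → ‖x - y‖ < r → ‖g x - g y‖ < ε := by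
  obtain ⟨r, hr, hgr⟩ := uniformContinuousOn_iff.1
    ((isCompact_closedBall (0 : E) K).uniformContinuousOn_of_continuous hg.continuousOn) ε hε
  simp only [mem_closedBall_zero_iff, dist_eq_norm] at hgr
  exact ⟨r, hr, fun x y hx hy => hgr x hx y hy⟩

section RelativeFunction

variable {E G : Type*} [NormedAddCommGroup E] [NormedSpace ℝ E]
  [NormedAddCommGroup G] [NormedSpace ℝ G]

/-- The relative function `f (l + ξ | l) = f (l + ξ) - f l - Df(l) ξ`, the first-order Taylor
remainder of `f` at the base point `l`; the two partial derivatives of the paper are combined into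
the total derivative `fderiv ℝ f l`. -/
noncomputable def relativeFunction (f : E → G) (l ξ : E) : G :=
  f (l + ξ) - f l - fderiv ℝ f l ξ

lemma relativeFunction_sub_relativeFunction {f : E → G} (hf : Differentiable ℝ f) (l m ξ : E) :
    relativeFunction f l ξ - relativeFunction f m ξ =
      relativeFunction (fun x => f x - f (x + (m - l))) l ξ := by
  have hlξ : l + ξ + (m - l) = m + ξ := by abel
  simp only [relativeFunction, fderiv_sub_comp_add_right hf, hlξ, add_sub_cancel,
    sub_apply]
  abel

lemma norm_relativeFunction_le_mul_norm_sq {g : E → G} {C : ℝ} {l ξ : E}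
    (hg : ∀ x ∈ closedBall l ‖ξ‖, DifferentiableAt ℝ g x)
    (hg' : ∀ x ∈ closedBall l ‖ξ‖, DifferentiableAt ℝ (fderiv ℝ g) x)
    (hC : ∀ x ∈ closedBall l ‖ξ‖, ‖fderiv ℝ (fderiv ℝ g) x‖ ≤ C) :
    ‖relativeFunction g l ξ‖ ≤ C * ‖ξ‖ ^ 2 := by
  have hconv : Convex ℝ (closedBall l ‖ξ‖) := convex_closedBall _ _
  have hl : l ∈ closedBall l ‖ξ‖ := mem_closedBall_self (norm_nonneg ξ)
  have hlξ : l + ξ ∈ closedBall l ‖ξ‖ := by simp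
  have hC₀ : 0 ≤ C := (norm_nonneg (fderiv ℝ (fderiv ℝ g) l)).trans (hC l hl)
  have hderiv : ∀ x ∈ closedBall l ‖ξ‖, ‖fderiv ℝ g x - fderiv ℝ g l‖ ≤ C * ‖ξ‖ := fun x hx =>
    (hconv.norm_image_sub_le_of_norm_fderiv_le hg' hC hl hx).trans
      (mul_le_mul_of_nonneg_left (mem_closedBall_iff_norm.1 hx) hC₀)
  have hremainder := hconv.norm_image_sub_le_of_norm_fderiv_le' hg hderiv hl hlξ
  rwa [add_sub_cancel_left, mul_assoc, ← sq] at hremainder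

lemma norm_relativeFunction_sub_le (f : E → G) (l m ξ : E) :
    ‖relativeFunction f l ξ - relativeFunction f m ξ‖ ≤
      ‖f (l + ξ) - f (m + ξ)‖ + ‖f l - f m‖ + ‖fderiv ℝ f l - fderiv ℝ f m‖ * ‖ξ‖ := by
  have hsplit : relativeFunction f l ξ - relativeFunction f m ξ =
      f (l + ξ) - f (m + ξ) - (f l - f m) - (fderiv ℝ f l - fderiv ℝ f m) ξ := by
    rw [relativeFunction, relativeFunction, sub_apply]
    abel
  rw [hsplit]
  exact norm_sub_le_of_le (norm_sub_le _ _) (ContinuousLinearMap.le_opNorm _ _)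

lemma exists_forall_norm_relativeFunction_sub_le_mul_norm_sq [ProperSpace E] {f : E → G}
    (hf : ContDiff ℝ 2 f) (K ρ : ℝ) {ε : ℝ} (hε : 0 < ε) :
    ∃ r > 0, ∀ l m : E, ‖l‖ ≤ K → ‖m‖ ≤ K → ‖l - m‖ < r → ∀ ξ : E, ‖ξ‖ ≤ ρ →
      ‖relativeFunction f l ξ - relativeFunction f m ξ‖ ≤ ε * ‖ξ‖ ^ 2 := by
  have hf' : ContDiff ℝ 1 (fderiv ℝ f) := hf.fderiv_right (by norm_num)
  have hdf : Differentiable ℝ f := hf.differentiable (by norm_num)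
  have hdf' : Differentiable ℝ (fderiv ℝ f) := hf'.differentiable (by norm_num)
  obtain ⟨r, hr, hf''⟩ := exists_forall_norm_sub_lt_of_continuous
    (hf'.continuous_fderiv (by norm_num)) (K + ρ) hε
  refine ⟨r, hr, fun l m hl hm hlm ξ hξ => ?_⟩
  rw [relativeFunction_sub_relativeFunction hdf]
  refine norm_relativeFunction_le_mul_norm_sq (fun x _ => ?_) (fun x _ => ?_) fun x hx => ?_
  · exact (hdf x).sub ((differentiableAt_comp_add_right _).2 (hdf _))
  · rw [fderiv_sub_comp_add_right hdf]
    exact (hdf' x).sub ((differentiableAt_comp_add_right _).2 (hdf' _))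
  · have hxl : ‖x - l‖ ≤ ρ := (mem_closedBall_iff_norm.1 hx).trans hξ
    have hx_le : ‖x‖ ≤ K + ρ := by linarith [norm_le_norm_add_norm_sub' x l]
    have hx_add_le : ‖x + (m - l)‖ ≤ K + ρ := by
      rw [show x + (m - l) = m + (x - l) by abel]
      exact norm_add_le_of_le hm hxl
    rw [fderiv_sub_comp_add_right hdf, fderiv_sub_comp_add_right hdf']
    exact (hf'' x _ hx_le hx_add_le (by simpa [norm_sub_rev] using hlm)).le

end RelativeFunction

section Growth

lemma rpow_le_one_add_rpow {a s t : ℝ} (ha : 0 ≤ a) (hs : 0 ≤ s) (hst : s ≤ t) :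
    a ^ s ≤ 1 + a ^ t := by
  rcases le_total a 1 with h | h
  · linarith [Real.rpow_le_one ha h hs, Real.rpow_nonneg ha t]
  · linarith [Real.rpow_le_rpow_of_exponent_le h hst]

lemma add_rpow_le_mul_one_add_rpow {a b p : ℝ} (ha : 0 ≤ a) (hb : 0 ≤ b) (hp : 0 ≤ p) :
    (a + b) ^ p ≤ (a + 1) ^ p * (1 + b ^ p) := by
  have ha' : 0 ≤ (a + 1) ^ p := by positivity
  have hb' : 0 ≤ b ^ p := by positivity
  rcases le_total b 1 with h | h
  · calc (a + b) ^ p ≤ (a + 1) ^ p := by gcongr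
      _ ≤ (a + 1) ^ p * (1 + b ^ p) := le_mul_of_one_le_right ha' (by linarith)
  · calc (a + b) ^ p ≤ ((a + 1) * b) ^ p := by gcongr; nlinarith
      _ = (a + 1) ^ p * b ^ p := Real.mul_rpow (by linarith) hb
      _ ≤ (a + 1) ^ p * (1 + b ^ p) := by gcongr; linarith

lemma le_three_mul_of_growth_fst {A a b c p q : ℝ} (ha : 0 ≤ a) (hb : 0 ≤ b) (hc : 0 ≤ c)
    (hp : 1 ≤ p) (hq : 0 ≤ q) (h : A ≤ c * (1 + a ^ (p - 1) + b ^ (q * (p - 1) / p))) :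
    A ≤ 3 * c * (1 + a ^ p + b ^ q) := by
  have hexp₀ : 0 ≤ q * (p - 1) / p := div_nonneg (mul_nonneg hq (by linarith)) (by linarith)
  have hexp : q * (p - 1) / p ≤ q := by
    rw [div_le_iff₀ (by linarith)]
    nlinarith
  have ha' := rpow_le_one_add_rpow ha (sub_nonneg.2 hp) (sub_le_self p zero_le_one)
  have hb' := rpow_le_one_add_rpow hb hexp₀ hexp
  have hap : 0 ≤ a ^ p := by positivity
  have hbq : 0 ≤ b ^ q := by positivity
  calc A ≤ c * (1 + a ^ (p - 1) + b ^ (q * (p - 1) / p)) := h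
    _ ≤ c * (3 * (1 + a ^ p + b ^ q)) := by gcongr; linarith
    _ = 3 * c * (1 + a ^ p + b ^ q) := by ring

lemma le_three_mul_of_growth_snd {A a b c p q : ℝ} (ha : 0 ≤ a) (hb : 0 ≤ b) (hc : 0 ≤ c)
    (hp : 0 ≤ p) (hq : 1 ≤ q) (h : A ≤ c * (1 + a ^ (p * (q - 1) / q) + b ^ (q - 1))) :
    A ≤ 3 * c * (1 + a ^ p + b ^ q) := by
  rw [add_right_comm] at h ⊢
  exact le_three_mul_of_growth_fst hb ha hc hq hp h

variable {E F G : Type*} [NormedAddCommGroup E] [NormedAddCommGroup F]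

lemma one_add_rpow_norm_add_le_mul {p q K : ℝ} (hp : 0 ≤ p) (hq : 0 ≤ q) {y : E × F}
    (hy : ‖y‖ ≤ K) (ξ : E × F) :
    1 + ‖(y + ξ).1‖ ^ p + ‖(y + ξ).2‖ ^ q ≤
      (1 + (K + 1) ^ p + (K + 1) ^ q) * (1 + ‖ξ.1‖ ^ p + ‖ξ.2‖ ^ q) := by
  have hK : 0 ≤ K := (norm_nonneg y).trans hy
  have hξ₁ : 0 ≤ ‖ξ.1‖ ^ p := by positivity
  have hξ₂ : 0 ≤ ‖ξ.2‖ ^ q := by positivity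
  have hfst : ‖(y + ξ).1‖ ^ p ≤ (K + 1) ^ p * (1 + ‖ξ.1‖ ^ p + ‖ξ.2‖ ^ q) :=
    calc ‖(y + ξ).1‖ ^ p ≤ (K + ‖ξ.1‖) ^ p := by
          gcongr
          exact norm_add_le_of_le ((norm_fst_le y).trans hy) le_rfl
      _ ≤ (K + 1) ^ p * (1 + ‖ξ.1‖ ^ p) := add_rpow_le_mul_one_add_rpow hK (norm_nonneg _) hp
      _ ≤ (K + 1) ^ p * (1 + ‖ξ.1‖ ^ p + ‖ξ.2‖ ^ q) :=
          mul_le_mul_of_nonneg_left (by linarith) (by positivity)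
  have hsnd : ‖(y + ξ).2‖ ^ q ≤ (K + 1) ^ q * (1 + ‖ξ.1‖ ^ p + ‖ξ.2‖ ^ q) :=
    calc ‖(y + ξ).2‖ ^ q ≤ (K + ‖ξ.2‖) ^ q := by
          gcongr
          exact norm_add_le_of_le ((norm_snd_le y).trans hy) le_rfl
      _ ≤ (K + 1) ^ q * (1 + ‖ξ.2‖ ^ q) := add_rpow_le_mul_one_add_rpow hK (norm_nonneg _) hq
      _ ≤ (K + 1) ^ q * (1 + ‖ξ.1‖ ^ p + ‖ξ.2‖ ^ q) :=
          mul_le_mul_of_nonneg_left (by linarith) (by positivity)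
  linarith

variable [NormedSpace ℝ E] [NormedSpace ℝ F] [NormedAddCommGroup G] [NormedSpace ℝ G]

lemma exists_forall_norm_comp_add_sub_le {p q c K ε : ℝ} (hp : 0 ≤ p) (hq : 0 ≤ q)
    (hK : 0 ≤ K) (hε : 0 < ε) {f : E × F → G} (hf : Differentiable ℝ f)
    (hgr : ∀ z, ‖fderiv ℝ f z‖ ≤ c * (1 + ‖z.1‖ ^ p + ‖z.2‖ ^ q)) :
    ∃ r > 0, ∀ l m : E × F, ‖l‖ ≤ K → ‖m‖ ≤ K → ‖l - m‖ < r → ∀ ξ : E × F,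
      ‖f (l + ξ) - f (m + ξ)‖ ≤ ε * (1 + ‖ξ.1‖ ^ p + ‖ξ.2‖ ^ q) := by
  set C := |c| * (1 + (K + 1) ^ p + (K + 1) ^ q)
  have hC : 0 ≤ C := by positivity
  refine ⟨ε / (C + 1), by positivity, fun l m hl hm hlm ξ => ?_⟩
  have hbound : ∀ y ∈ closedBall (0 : E × F) K,
      ‖fderiv ℝ (fun x => f (x + ξ)) y‖ ≤ C * (1 + ‖ξ.1‖ ^ p + ‖ξ.2‖ ^ q) := fun y hy =>
    calc ‖fderiv ℝ (fun x => f (x + ξ)) y‖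
        ≤ c * (1 + ‖(y + ξ).1‖ ^ p + ‖(y + ξ).2‖ ^ q) := by
          rw [fderiv_comp_add_right]
          exact hgr (y + ξ)
      _ ≤ |c| * ((1 + (K + 1) ^ p + (K + 1) ^ q) * (1 + ‖ξ.1‖ ^ p + ‖ξ.2‖ ^ q)) := by
          gcongr
          · exact le_abs_self c
          · exact one_add_rpow_norm_add_le_mul hp hq (mem_closedBall_zero_iff.1 hy) ξ
      _ = C * (1 + ‖ξ.1‖ ^ p + ‖ξ.2‖ ^ q) := by ring
  have hClm : C * ‖l - m‖ ≤ ε :=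
    calc C * ‖l - m‖ ≤ (C + 1) * (ε / (C + 1)) := by gcongr; linarith
      _ = ε := by field_simp
  calc ‖f (l + ξ) - f (m + ξ)‖ ≤ C * (1 + ‖ξ.1‖ ^ p + ‖ξ.2‖ ^ q) * ‖l - m‖ :=
        (convex_closedBall 0 K).norm_image_sub_le_of_norm_fderiv_le
          (fun y _ => (differentiableAt_comp_add_right ξ).2 (hf (y + ξ))) hbound
          (mem_closedBall_zero_iff.2 hm) (mem_closedBall_zero_iff.2 hl)
    _ = C * ‖l - m‖ * (1 + ‖ξ.1‖ ^ p + ‖ξ.2‖ ^ q) := by ring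
    _ ≤ ε * (1 + ‖ξ.1‖ ^ p + ‖ξ.2‖ ^ q) := by gcongr

end Growth

section BasePointContinuity

variable {E F G : Type*} [NormedAddCommGroup E] [NormedAddCommGroup F]

/-- The weight `|V_i(z)|² = |z|^i + |z|²` against which relative functions are measured. -/
noncomputable def sqV (i : ℝ) (z : E) : ℝ :=
  ‖z‖ ^ i + ‖z‖ ^ (2 : ℝ)

lemma rpow_add_rpow_add_sq_le_sqV_add_sqV (p q : ℝ) (ξ : E × F) :
    ‖ξ.1‖ ^ p + ‖ξ.2‖ ^ q + ‖ξ‖ ^ 2 ≤ sqV p ξ.1 + sqV q ξ.2 := by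
  have hsq : ‖ξ‖ ^ 2 ≤ ‖ξ.1‖ ^ 2 + ‖ξ.2‖ ^ 2 := by
    rcases max_choice ‖ξ.1‖ ‖ξ.2‖ with h | h <;> rw [Prod.norm_def, h] <;> simp
  simp only [sqV, Real.rpow_two]
  linarith

lemma sq_norm_le_sqV_add_sqV (p q : ℝ) (ξ : E × F) : ‖ξ‖ ^ 2 ≤ sqV p ξ.1 + sqV q ξ.2 :=
  (le_add_of_nonneg_left (by positivity)).trans (rpow_add_rpow_add_sq_le_sqV_add_sqV p q ξ)

variable [NormedSpace ℝ E] [ProperSpace E] [NormedSpace ℝ F] [ProperSpace F]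
  [NormedAddCommGroup G] [NormedSpace ℝ G]

lemma exists_forall_norm_relativeFunction_sub_le_of_one_le {p q c K δ : ℝ} (hp : 0 ≤ p)
    (hq : 0 ≤ q) (hK : 0 ≤ K) (hδ : 0 < δ) {f : E × F → G} (hf : ContDiff ℝ 1 f)
    (hgr : ∀ z, ‖fderiv ℝ f z‖ ≤ c * (1 + ‖z.1‖ ^ p + ‖z.2‖ ^ q)) :
    ∃ r > 0, ∀ l m : E × F, ‖l‖ ≤ K → ‖m‖ ≤ K → ‖l - m‖ < r → ∀ ξ : E × F, 1 ≤ ‖ξ‖ →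
      ‖relativeFunction f l ξ - relativeFunction f m ξ‖ ≤ δ * (sqV p ξ.1 + sqV q ξ.2) := by
  have hδ' : 0 < δ / 3 := by positivity
  obtain ⟨r₁, hr₁, hshift⟩ := exists_forall_norm_comp_add_sub_le hp hq hK hδ'
    (hf.differentiable (by norm_num)) hgr
  obtain ⟨r₂, hr₂, hval⟩ := exists_forall_norm_sub_lt_of_continuous hf.continuous K hδ'
  obtain ⟨r₃, hr₃, hderiv⟩ := exists_forall_norm_sub_lt_of_continuous
    (hf.continuous_fderiv (by norm_num)) K hδ'
  refine ⟨min r₁ (min r₂ r₃), by positivity, fun l m hl hm hlm ξ hξ => ?_⟩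
  obtain ⟨hlm₁, hlm₂, hlm₃⟩ : ‖l - m‖ < r₁ ∧ ‖l - m‖ < r₂ ∧ ‖l - m‖ < r₃ := by
    simpa only [lt_min_iff] using hlm
  have hsq : ‖ξ‖ ≤ ‖ξ‖ ^ 2 := le_self_pow₀ hξ two_ne_zero
  have hnorm_weight : ‖ξ‖ ≤ sqV p ξ.1 + sqV q ξ.2 := hsq.trans (sq_norm_le_sqV_add_sqV p q ξ)
  have hgrowth_weight : 1 + ‖ξ.1‖ ^ p + ‖ξ.2‖ ^ q ≤ sqV p ξ.1 + sqV q ξ.2 := by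
    linarith [rpow_add_rpow_add_sq_le_sqV_add_sqV p q ξ]
  calc ‖relativeFunction f l ξ - relativeFunction f m ξ‖
      ≤ ‖f (l + ξ) - f (m + ξ)‖ + ‖f l - f m‖ + ‖fderiv ℝ f l - fderiv ℝ f m‖ * ‖ξ‖ :=
        norm_relativeFunction_sub_le f l m ξ
    _ ≤ δ / 3 * (1 + ‖ξ.1‖ ^ p + ‖ξ.2‖ ^ q) + δ / 3 * 1 + δ / 3 * ‖ξ‖ := by
        rw [mul_one]
        gcongr
        exacts [hshift l m hl hm hlm₁ ξ, (hval l m hl hm hlm₂).le, (hderiv l m hl hm hlm₃).le]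
    _ = δ / 3 * ((1 + ‖ξ.1‖ ^ p + ‖ξ.2‖ ^ q) + 1 + ‖ξ‖) := by ring
    _ ≤ δ / 3 * ((sqV p ξ.1 + sqV q ξ.2) + (sqV p ξ.1 + sqV q ξ.2) + (sqV p ξ.1 + sqV q ξ.2)) := by
        gcongr
        exact hξ.trans hnorm_weight
    _ = δ * (sqV p ξ.1 + sqV q ξ.2) := by ring

theorem exists_forall_norm_relativeFunction_sub_le {p q c K δ : ℝ} (hp : 0 ≤ p) (hq : 0 ≤ q)
    (hK : 0 ≤ K) (hδ : 0 < δ) {f : E × F → G} (hf : ContDiff ℝ 2 f)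
    (hgr : ∀ z, ‖fderiv ℝ f z‖ ≤ c * (1 + ‖z.1‖ ^ p + ‖z.2‖ ^ q)) :
    ∃ r > 0, ∀ l m : E × F, ‖l‖ ≤ K → ‖m‖ ≤ K → ‖l - m‖ < r → ∀ ξ : E × F,
      ‖relativeFunction f l ξ - relativeFunction f m ξ‖ ≤ δ * (sqV p ξ.1 + sqV q ξ.2) := by
  obtain ⟨r₁, hr₁, hnear⟩ := exists_forall_norm_relativeFunction_sub_le_mul_norm_sq hf K 1 hδ
  obtain ⟨r₂, hr₂, hfar⟩ := exists_forall_norm_relativeFunction_sub_le_of_one_le hp hq hK hδ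
    (hf.of_le one_le_two) hgr
  refine ⟨min r₁ r₂, by positivity, fun l m hl hm hlm ξ => ?_⟩
  obtain ⟨hlm₁, hlm₂⟩ := lt_min_iff.1 hlm
  rcases le_total ‖ξ‖ 1 with hξ | hξ
  · exact (hnear l m hl hm hlm₁ ξ hξ).trans
      (mul_le_mul_of_nonneg_left (sq_norm_le_sqV_add_sqV p q ξ) hδ.le)
  · exact hfar l m hl hm hlm₂ ξ hξ

theorem relative_function_base_point_continuity_general {p q c : ℝ} (hp : 0 ≤ p) (hq : 0 ≤ q)
    {f : E × F → G} {fF : E × F → E →L[ℝ] G} {fη : E × F → F →L[ℝ] G} (hf : ContDiff ℝ 2 f)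
    (hfF : ∀ z : E × F, HasFDerivAt (fun x => f (x, z.2)) (fF z) z.1)
    (hfη : ∀ z : E × F, HasFDerivAt (fun y => f (z.1, y)) (fη z) z.2)
    (hgrF : ∀ z, ‖fF z‖ ≤ c * (1 + ‖z.1‖ ^ p + ‖z.2‖ ^ q))
    (hgrη : ∀ z, ‖fη z‖ ≤ c * (1 + ‖z.1‖ ^ p + ‖z.2‖ ^ q)) :
    ∀ K > 0, ∀ δ > 0, ∃ R > 0, ∀ (l1 m1 ξ1 : E) (l2 m2 ξ2 : F),
      ‖l1‖ + ‖l2‖ ≤ K → ‖m1‖ + ‖m2‖ ≤ K → ‖l1 - m1‖ + ‖l2 - m2‖ < R →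
      ‖(f (l1 + ξ1, l2 + ξ2) - f (l1, l2) - fF (l1, l2) ξ1 - fη (l1, l2) ξ2)
        - (f (m1 + ξ1, m2 + ξ2) - f (m1, m2) - fF (m1, m2) ξ1 - fη (m1, m2) ξ2)‖
        ≤ δ * (sqV p ξ1 + sqV q ξ2) := by
  intro K hK δ hδ
  have hfderiv (z : E × F) : fderiv ℝ f z = (fF z).coprod (fη z) :=
    fderiv_eq_coprod_of_hasFDerivAt_partial (hf.differentiable (by norm_num) z) (hfF z) (hfη z)
  have hgr (z : E × F) : ‖fderiv ℝ f z‖ ≤ 2 * c * (1 + ‖z.1‖ ^ p + ‖z.2‖ ^ q) := by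
    rw [hfderiv]
    linarith [opNorm_coprod_le_add (fF z) (fη z), hgrF z, hgrη z]
  have hnorm (x : E) (y : F) : ‖(x, y)‖ ≤ ‖x‖ + ‖y‖ :=
    max_le_add_of_nonneg (norm_nonneg x) (norm_nonneg y)
  obtain ⟨R, hR, hrel⟩ := exists_forall_norm_relativeFunction_sub_le hp hq hK.le hδ hf hgr
  refine ⟨R, hR, fun l1 m1 ξ1 l2 m2 ξ2 hl hm hlm => ?_⟩
  simpa only [relativeFunction, hfderiv, ContinuousLinearMap.coprod_apply, Prod.mk_add_mk,
    sub_add_eq_sub_sub] using hrel (l1, l2) (m1, m2) ((hnorm _ _).trans hl) ((hnorm _ _).trans hm)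
      ((hnorm _ _).trans_lt hlm) (ξ1, ξ2)

end BasePointContinuity

/-- Lemma 2(b): uniform continuity of the relative function
`f(λ+ξ | λ) := f(λ+ξ) − f(λ) − f_F(λ)·ξ₁ − f_η(λ)ξ₂` in its base point on compact
sets, measured against the weight `|V_p(ξ₁)|² + |V_q(ξ₂)|²`. -/
theorem relative_function_base_point_continuity
    (d : ℕ) (p q c : ℝ) (hp : 2 ≤ p) (hq : 2 ≤ q) (hc : 0 < c)
    (f : (MatSp d × ℝ) → ℝ) (fF : (MatSp d × ℝ) → (MatSp d →L[ℝ] ℝ))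
    (fη : (MatSp d × ℝ) → ℝ)
    (hf : ContDiff ℝ 3 f)
    (hfF : ∀ z : MatSp d × ℝ, HasFDerivAt (fun w => f (w, z.2)) (fF z) z.1)
    (hfη : ∀ z : MatSp d × ℝ, HasDerivAt (fun t => f (z.1, t)) (fη z) z.2)
    (hgrF : ∀ z : MatSp d × ℝ,
      ‖fF z‖ ≤ c * (1 + ‖z.1‖ ^ (p - 1) + |z.2| ^ (q * (p - 1) / p)))
    (hgrη : ∀ z : MatSp d × ℝ,
      |fη z| ≤ c * (1 + ‖z.1‖ ^ (p * (q - 1) / q) + |z.2| ^ (q - 1))) :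
    ∀ K > 0, ∀ δ > 0, ∃ R > 0, ∀ (l1 m1 ξ1 : MatSp d) (l2 m2 ξ2 : ℝ),
      ‖l1‖ + |l2| ≤ K → ‖m1‖ + |m2| ≤ K → ‖l1 - m1‖ + |l2 - m2| < R →
      |(f (l1 + ξ1, l2 + ξ2) - f (l1, l2) - fF (l1, l2) ξ1 - fη (l1, l2) * ξ2)
        - (f (m1 + ξ1, m2 + ξ2) - f (m1, m2) - fF (m1, m2) ξ1 - fη (m1, m2) * ξ2)|
        ≤ δ * ((‖ξ1‖ ^ p + ‖ξ1‖ ^ (2:ℝ)) + (|ξ2| ^ q + |ξ2| ^ (2:ℝ))) := by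
  simpa [sqV, mul_comm (fη _)] using relative_function_base_point_continuity_general
    (c := 3 * c) (zero_le_two.trans hp) (zero_le_two.trans hq) (hf.of_le (by norm_num)) hfF hfη
    (fun z => le_three_mul_of_growth_fst (norm_nonneg _) (norm_nonneg _) hc.le (by linarith)
      (by linarith) (hgrF z))
    (fun z => (ContinuousLinearMap.norm_toSpanSingleton _).trans_le <|
      le_three_mul_of_growth_snd (norm_nonneg _) (norm_nonneg _) hc.le (by linarith)
        (by linarith) (hgrη z))
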